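/- arXiv:1910.06589 — 3 statements merged into one kernel-verified Lean document; each statement's English description precedes it below -/
import Mathlib

section
/- For all s ∈ ℝ, the alternative moving frame satisfies the derivative formulas N′(s) = f(s)·C(s), C′(s) = −f(s)·N(s) + g(s)·W(s), and W′(s) = −g(s)·C(s). -/
open RealInnerProductSpace

/-- Cross product on `EuclideanSpace ℝ (Fin 3)`. -/
noncomputable def cross3 (u v : EuclideanSpace ℝ (Fin 3)) : EuclideanSpace ℝ (Fin 3) :=
  (EuclideanSpace.equiv (Fin 3) ℝ).symm
    (crossProduct ((EuclideanSpace.equiv (Fin 3) ℝ) u) ((EuclideanSpace.equiv (Fin 3) ℝ) v))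

/-- Determinant of the 3×3 matrix whose rows are the given vectors. -/
noncomputable def det3 (u v w : EuclideanSpace ℝ (Fin 3)) : ℝ :=
  Matrix.det (Matrix.of ![(EuclideanSpace.equiv (Fin 3) ℝ) u,
    (EuclideanSpace.equiv (Fin 3) ℝ) v, (EuclideanSpace.equiv (Fin 3) ℝ) w])

lemma cross3_apply (u v : EuclideanSpace ℝ (Fin 3)) :
    cross3 u v = !₂[u 1 * v 2 - u 2 * v 1, u 2 * v 0 - u 0 * v 2, u 0 * v 1 - u 1 * v 0] := by
  ext i
  fin_cases i <;> simp [cross3, cross_apply]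

lemma cross3_add_right (u v w : EuclideanSpace ℝ (Fin 3)) :
    cross3 u (v + w) = cross3 u v + cross3 u w := by
  simp [cross3]

lemma cross3_smul_right (c : ℝ) (u v : EuclideanSpace ℝ (Fin 3)) :
    cross3 u (c • v) = c • cross3 u v := by
  simp [cross3]

lemma cross3_add_left (u v w : EuclideanSpace ℝ (Fin 3)) :
    cross3 (u + v) w = cross3 u w + cross3 v w := by
  simp [cross3]

lemma cross3_smul_left (c : ℝ) (u v : EuclideanSpace ℝ (Fin 3)) :
    cross3 (c • u) v = c • cross3 u v := by
  simp [cross3]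

lemma cross3_self (u : EuclideanSpace ℝ (Fin 3)) : cross3 u u = 0 := by
  simp [cross3]

lemma inner_eq_sum_three (u v : EuclideanSpace ℝ (Fin 3)) :
    ⟪u, v⟫ = u 0 * v 0 + u 1 * v 1 + u 2 * v 2 := by
  simp [PiLp.inner_apply, Fin.sum_univ_three, mul_comm]

lemma cross3_cross3_right (u v w : EuclideanSpace ℝ (Fin 3)) :
    cross3 u (cross3 v w) = ⟪u, w⟫ • v - ⟪u, v⟫ • w := by
  ext i
  fin_cases i <;> simp [cross3_apply, inner_eq_sum_three] <;> ring

lemma inner_self_cross3 (u v : EuclideanSpace ℝ (Fin 3)) : ⟪u, cross3 u v⟫ = 0 := by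
  simp [cross3_apply, inner_eq_sum_three]
  ring

lemma inner_cross3_self (u v : EuclideanSpace ℝ (Fin 3)) : ⟪v, cross3 u v⟫ = 0 := by
  simp [cross3_apply, inner_eq_sum_three]
  ring

lemma inner_cross3_cross3 (u v w x : EuclideanSpace ℝ (Fin 3)) :
    ⟪cross3 u v, cross3 w x⟫ = ⟪u, w⟫ * ⟪v, x⟫ - ⟪u, x⟫ * ⟪v, w⟫ := by
  simp [cross3_apply, inner_eq_sum_three]
  ring

lemma HasDerivAt.cross3 {u v : ℝ → EuclideanSpace ℝ (Fin 3)} {u' v' : EuclideanSpace ℝ (Fin 3)}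
    {s : ℝ} (hu : HasDerivAt u u' s) (hv : HasDerivAt v v' s) :
    HasDerivAt (fun x => cross3 (u x) (v x)) (cross3 (u s) v' + cross3 u' (v s)) s :=
  (LinearMap.toContinuousBilinearMap (LinearMap.mk₂ ℝ _root_.cross3 cross3_add_left
    cross3_smul_left cross3_add_right cross3_smul_right)).hasDerivAt_of_bilinear
    (u := u) (v := v) (fun _ => hu) (fun _ => hv)

/-- Expansion of a vector in the positively oriented orthonormal frame `t`, `n`, `t × n`. -/
lemma eq_sum_inner_smul_frame {t n : EuclideanSpace ℝ (Fin 3)} (ht : ⟪t, t⟫ = 1)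
    (hn : ⟪n, n⟫ = 1) (htn : ⟪t, n⟫ = 0) (v : EuclideanSpace ℝ (Fin 3)) :
    v = ⟪v, t⟫ • t + ⟪v, n⟫ • n + ⟪v, cross3 t n⟫ • cross3 t n := by
  have hnt : ⟪n, t⟫ = 0 := by rw [real_inner_comm, htn]
  have hb : ⟪cross3 t n, cross3 t n⟫ = 1 := by
    rw [inner_cross3_cross3, ht, hn, htn]
    ring
  have horth : Orthonormal ℝ ![t, n, cross3 t n] := by
    rw [orthonormal_iff_ite]
    intro i j
    fin_cases i <;> fin_cases j <;>
      simp [ht, hn, htn, hnt, hb, inner_self_cross3, inner_cross3_self,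
        real_inner_comm _ (cross3 t n), -inner_self_eq_norm_sq_to_K]
  let b := (basisOfOrthonormalOfCardEqFinrank horth (by simp)).toOrthonormalBasis
    (by simpa using horth)
  have h := b.sum_repr' v
  simp only [b, Module.Basis.coe_toOrthonormalBasis, coe_basisOfOrthonormalOfCardEqFinrank,
    Fin.sum_univ_three] at h
  simpa [real_inner_comm] using h.symm

lemma inner_deriv_eq_zero_of_norm_eq_one {E : Type*} [NormedAddCommGroup E]
    [InnerProductSpace ℝ E] {u : ℝ → E} {u' : E} {s : ℝ} (hu : HasDerivAt u u' s)
    (h : ∀ x, ‖u x‖ = 1) : ⟪u', u s⟫ = 0 := by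
  have h₁ := hu.inner ℝ hu
  have h₂ : (fun x => ⟪u x, u x⟫) = fun _ => (1 : ℝ) := by
    funext x
    rw [real_inner_self_eq_norm_sq, h, one_pow]
  rw [h₂] at h₁
  have h₃ := h₁.unique (hasDerivAt_const s 1)
  rw [real_inner_comm] at h₃
  linarith

lemma HasDerivAt.div_sqrt_sq_add_sq {p q : ℝ → ℝ} {p' q' s : ℝ} (hp : HasDerivAt p p' s)
    (hq : HasDerivAt q q' s) (h : 0 < p s ^ 2 + q s ^ 2) :
    HasDerivAt (fun x => p x / √(p x ^ 2 + q x ^ 2))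
      (q s * (p' * q s - p s * q') / (p s ^ 2 + q s ^ 2) / √(p s ^ 2 + q s ^ 2)) s := by
  have hs : √(p s ^ 2 + q s ^ 2) ≠ 0 := (Real.sqrt_pos.2 h).ne'
  have hsq := Real.sq_sqrt h.le
  refine (hp.fun_div (((hp.fun_pow 2).fun_add (hq.fun_pow 2)).sqrt h.ne') hs).congr_deriv ?_
  set r := √(p s ^ 2 + q s ^ 2)
  rw [← hsq]
  field_simp
  simp only [Nat.cast_ofNat]
  rw [hsq]
  ring

theorem stmt_0
    (α : ℝ → EuclideanSpace ℝ (Fin 3))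
    (hα : ContDiff ℝ (⊤ : ℕ∞) α)
    (hunit : ∀ s, ‖deriv α s‖ = 1)
    (T : ℝ → EuclideanSpace ℝ (Fin 3)) (hT : ∀ s, T s = deriv α s)
    (κ : ℝ → ℝ) (hκ : ∀ s, κ s = ‖deriv (deriv α) s‖) (hκpos : ∀ s, 0 < κ s)
    (N : ℝ → EuclideanSpace ℝ (Fin 3)) (hN : ∀ s, N s = (κ s)⁻¹ • deriv (deriv α) s)
    (B : ℝ → EuclideanSpace ℝ (Fin 3)) (hB : ∀ s, B s = cross3 (T s) (N s))
    (τ : ℝ → ℝ) (hτ : ∀ s, τ s = ⟪deriv N s, B s⟫)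
    (f : ℝ → ℝ) (hf : ∀ s, f s = Real.sqrt (κ s ^ 2 + τ s ^ 2))
    (g : ℝ → ℝ) (hg : ∀ s, g s = κ s ^ 2 / (κ s ^ 2 + τ s ^ 2) * deriv (fun u => τ u / κ u) s)
    (C : ℝ → EuclideanSpace ℝ (Fin 3))
    (hC : ∀ s, C s = (Real.sqrt (κ s ^ 2 + τ s ^ 2))⁻¹ • ((-κ s) • T s + τ s • B s))
    (W : ℝ → EuclideanSpace ℝ (Fin 3))
    (hW : ∀ s, W s = (Real.sqrt (κ s ^ 2 + τ s ^ 2))⁻¹ • (τ s • T s + κ s • B s)) :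
    ∀ s : ℝ,
      deriv N s = f s • C s ∧
      deriv C s = (-f s) • N s + g s • W s ∧
      deriv W s = (-g s) • C s := by
  have hT_eq : T = deriv α := funext hT
  have hT_smooth : ContDiff ℝ (⊤ : ℕ∞) T := hT_eq ▸ (contDiff_infty_iff_deriv.1 hα).2
  have hT'_smooth : ContDiff ℝ (⊤ : ℕ∞) (deriv T) := (contDiff_infty_iff_deriv.1 hT_smooth).2
  simp only [← hT_eq] at hκ hN hunit
  have hκ_smooth : ContDiff ℝ (⊤ : ℕ∞) κ := by
    rw [funext hκ]
    exact hT'_smooth.norm ℝ fun s => norm_pos_iff.1 (hκ s ▸ hκpos s)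
  have hN_smooth : ContDiff ℝ (⊤ : ℕ∞) N := by
    rw [funext hN]
    exact (hκ_smooth.inv fun s => (hκpos s).ne').smul hT'_smooth
  have hN'_smooth : ContDiff ℝ (⊤ : ℕ∞) (deriv N) := (contDiff_infty_iff_deriv.1 hN_smooth).2
  have hT_deriv (s : ℝ) : HasDerivAt T (κ s • N s) s := by
    rw [hN, smul_inv_smul₀ (hκpos s).ne']
    exact (hT_smooth.differentiable (by simp) s).hasDerivAt
  have hN_norm (s : ℝ) : ‖N s‖ = 1 := by
    rw [hN, norm_smul, norm_inv, ← hκ, Real.norm_of_nonneg (hκpos s).le,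
      inv_mul_cancel₀ (hκpos s).ne']
  have hN_diff (s : ℝ) : HasDerivAt N (deriv N s) s :=
    (hN_smooth.differentiable (by simp) s).hasDerivAt
  have hTT (s : ℝ) : ⟪T s, T s⟫ = 1 := by rw [real_inner_self_eq_norm_sq, hunit, one_pow]
  have hNN (s : ℝ) : ⟪N s, N s⟫ = 1 := by rw [real_inner_self_eq_norm_sq, hN_norm, one_pow]
  have hTN (s : ℝ) : ⟪T s, N s⟫ = 0 := by
    have h := inner_deriv_eq_zero_of_norm_eq_one (hT_deriv s) hunit
    rw [real_inner_smul_left, real_inner_comm] at h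
    exact (mul_eq_zero.1 h).resolve_left (hκpos s).ne'
  have hN'T (s : ℝ) : ⟪deriv N s, T s⟫ = -κ s := by
    have h := (hT_deriv s).inner ℝ (hN_diff s)
    rw [funext hTN] at h
    have h' := h.unique (hasDerivAt_const s 0)
    rw [real_inner_smul_left, hNN, real_inner_comm] at h'
    linarith
  have hN' (s : ℝ) : deriv N s = (-κ s) • T s + τ s • B s := by
    have h := eq_sum_inner_smul_frame (hTT s) (hNN s) (hTN s) (deriv N s)
    rwa [hN'T, inner_deriv_eq_zero_of_norm_eq_one (hN_diff s) hN_norm, ← hB, ← hτ,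
      zero_smul, add_zero] at h
  have hB_deriv (s : ℝ) : HasDerivAt B (-(τ s • N s)) s := by
    have h := (hT_deriv s).cross3 (hN_diff s)
    rw [← funext hB, hN', cross3_add_right, cross3_smul_right, cross3_smul_right, cross3_self,
      cross3_smul_left, cross3_self, hB, cross3_cross3_right, hTT, hTN] at h
    simpa using h
  have hτ_diff : Differentiable ℝ τ := by
    rw [funext hτ]
    exact (hN'_smooth.differentiable (by simp)).inner ℝ fun s => (hB_deriv s).differentiableAt
  intro s
  have hκ' := (hκ_smooth.differentiable (by simp) s).hasDerivAt
  have hτ' := (hτ_diff s).hasDerivAt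
  have hpos : 0 < κ s ^ 2 + τ s ^ 2 := by have := hκpos s; positivity
  have hr : √(κ s ^ 2 + τ s ^ 2) ≠ 0 := (Real.sqrt_pos.2 hpos).ne'
  have hsq := Real.sq_sqrt hpos.le
  have hgs : g s = (deriv τ s * κ s - τ s * deriv κ s) / (κ s ^ 2 + τ s ^ 2) := by
    have hκs := (hκpos s).ne'
    rw [hg, (hτ'.fun_div hκ' hκs).deriv]
    field_simp
  have ha := hκ'.div_sqrt_sq_add_sq hτ' hpos
  have hb := hτ'.div_sqrt_sq_add_sq hκ' (by rwa [add_comm])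
  simp only [add_comm (τ _ ^ 2)] at hb
  have hC_eq : C = fun x => -((κ x / √(κ x ^ 2 + τ x ^ 2)) • T x) +
      (τ x / √(κ x ^ 2 + τ x ^ 2)) • B x := by
    funext x
    rw [hC]
    module
  have hW_eq : W = fun x => (τ x / √(κ x ^ 2 + τ x ^ 2)) • T x +
      (κ x / √(κ x ^ 2 + τ x ^ 2)) • B x := by
    funext x
    rw [hW]
    module
  refine ⟨?_, ?_, ?_⟩
  · rw [hN', hf, hC, smul_inv_smul₀ hr]
  · have h := ((ha.fun_smul (hT_deriv s)).fun_neg.fun_add (hb.fun_smul (hB_deriv s))).deriv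
    rw [← hC_eq] at h
    have hf' : f s = κ s / √(κ s ^ 2 + τ s ^ 2) * κ s + τ s / √(κ s ^ 2 + τ s ^ 2) * τ s := by
      rw [hf]
      field_simp
      exact hsq
    rw [h, hf', hgs, hW]
    module
  · have h := ((hb.fun_smul (hT_deriv s)).fun_add (ha.fun_smul (hB_deriv s))).deriv
    rw [← hW_eq] at h
    rw [h, hgs, hC]
    module
end

section
/- If τ(s) = 0 for all s ∈ ℝ (α is a planar curve), then the mean curvature H = (E·N − 2F·M + G·L)/(2(EG − F²)) of the C-ruled surface vanishes at every point (s, v) where EG − F² ≠ 0; that is, the C-ruled surface of a planar curve is a minimal surface. -/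
open RealInnerProductSpace

/-- Expansion of `det3` in coordinates. -/
lemma det3_eq (u v w : EuclideanSpace ℝ (Fin 3)) :
    det3 u v w = u 0 * (v 1 * w 2 - v 2 * w 1) - u 1 * (v 0 * w 2 - v 2 * w 0)
      + u 2 * (v 0 * w 1 - v 1 * w 0) := by
  simp [det3, Matrix.det_fin_three]
  ring

/-- The triple product formula. -/
lemma inner_cross3 (u v w : EuclideanSpace ℝ (Fin 3)) :
    ⟪w, cross3 u v⟫ = det3 u v w := by
  rw [det3_eq]
  simp [cross3, PiLp.inner_apply, Fin.sum_univ_three, crossProduct]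
  ring

/-- The torsion of a curve with velocity `T` and unit normal `‖T'‖⁻¹ • T'`, as a triple product. -/
lemma inner_deriv_normalize_cross3 {T : ℝ → EuclideanSpace ℝ (Fin 3)} {s : ℝ}
    (hT : DifferentiableAt ℝ (deriv T) s) (h0 : deriv T s ≠ 0) :
    ⟪deriv (fun u => ‖deriv T u‖⁻¹ • deriv T u) s, cross3 (T s) (‖deriv T s‖⁻¹ • deriv T s)⟫ =
      ‖deriv T s‖⁻¹ ^ 2 * det3 (T s) (deriv T s) (deriv (deriv T) s) := by
  have hinv : DifferentiableAt ℝ (fun u => ‖deriv T u‖⁻¹) s :=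
    (hT.norm ℝ h0).inv (norm_ne_zero_iff.mpr h0)
  rw [deriv_fun_smul hinv hT, inner_cross3, det3_eq, det3_eq]
  simp only [PiLp.add_apply, PiLp.smul_apply, smul_eq_mul]
  ring

theorem stmt_14
    (α : ℝ → EuclideanSpace ℝ (Fin 3))
    (hα : ContDiff ℝ (⊤ : ℕ∞) α)
    (hunit : ∀ s, ‖deriv α s‖ = 1)
    (T : ℝ → EuclideanSpace ℝ (Fin 3)) (hT : ∀ s, T s = deriv α s)
    (κ : ℝ → ℝ) (hκ : ∀ s, κ s = ‖deriv (deriv α) s‖) (hκpos : ∀ s, 0 < κ s)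
    (N : ℝ → EuclideanSpace ℝ (Fin 3)) (hN : ∀ s, N s = (κ s)⁻¹ • deriv (deriv α) s)
    (B : ℝ → EuclideanSpace ℝ (Fin 3)) (hB : ∀ s, B s = cross3 (T s) (N s))
    (τ : ℝ → ℝ) (hτ : ∀ s, τ s = ⟪deriv N s, B s⟫)
    (f : ℝ → ℝ) (hf : ∀ s, f s = Real.sqrt (κ s ^ 2 + τ s ^ 2))
    (g : ℝ → ℝ) (hg : ∀ s, g s = κ s ^ 2 / (κ s ^ 2 + τ s ^ 2) * deriv (fun u => τ u / κ u) s)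
    (C : ℝ → EuclideanSpace ℝ (Fin 3))
    (hC : ∀ s, C s = (Real.sqrt (κ s ^ 2 + τ s ^ 2))⁻¹ • ((-κ s) • T s + τ s • B s))
    (W : ℝ → EuclideanSpace ℝ (Fin 3))
    (hW : ∀ s, W s = (Real.sqrt (κ s ^ 2 + τ s ^ 2))⁻¹ • (τ s • T s + κ s • B s))
    (φs φv : ℝ → ℝ → EuclideanSpace ℝ (Fin 3))
    (hφs : ∀ s v, φs s v = deriv (fun u => α u + v • C u) s)
    (hφv : ∀ s v, φv s v = deriv (fun w => α s + w • C s) v)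
    (φss φsv φvv : ℝ → ℝ → EuclideanSpace ℝ (Fin 3))
    (hφss : ∀ s v, φss s v = deriv (fun u => φs u v) s)
    (hφsv : ∀ s v, φsv s v = deriv (fun u => φv u v) s)
    (hφvv : ∀ s v, φvv s v = deriv (fun w => φv s w) v)
    (EE FF GG LL MM NN : ℝ → ℝ → ℝ)
    (hEE : ∀ s v, EE s v = ‖φs s v‖ ^ 2)
    (hFF : ∀ s v, FF s v = ⟪φs s v, φv s v⟫)
    (hGG : ∀ s v, GG s v = ‖φv s v‖ ^ 2)
    (hLL : ∀ s v, LL s v =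
      det3 (φs s v) (φv s v) (φss s v) / Real.sqrt (EE s v * GG s v - FF s v ^ 2))
    (hMM : ∀ s v, MM s v =
      det3 (φs s v) (φv s v) (φsv s v) / Real.sqrt (EE s v * GG s v - FF s v ^ 2))
    (hNN : ∀ s v, NN s v =
      det3 (φs s v) (φv s v) (φvv s v) / Real.sqrt (EE s v * GG s v - FF s v ^ 2))
    (hplanar : ∀ s : ℝ, τ s = 0) :
    ∀ (s v : ℝ),
      EE s v * GG s v - FF s v ^ 2 ≠ 0 →
      (EE s v * NN s v - 2 * FF s v * MM s v + GG s v * LL s v) /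
        (2 * (EE s v * GG s v - FF s v ^ 2)) = 0 := by
  have hT_smooth : ContDiff ℝ (⊤ : ℕ∞) (deriv α) := (contDiff_infty_iff_deriv.mp hα).2
  have hT'_smooth : ContDiff ℝ (⊤ : ℕ∞) (deriv (deriv α)) :=
    (contDiff_infty_iff_deriv.mp hT_smooth).2
  have dα : Differentiable ℝ α := (contDiff_infty_iff_deriv.mp hα).1
  have dT : Differentiable ℝ (deriv α) := (contDiff_infty_iff_deriv.mp hT_smooth).1
  have dT' : Differentiable ℝ (deriv (deriv α)) := (contDiff_infty_iff_deriv.mp hT'_smooth).1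
  have hdet : ∀ s, det3 (deriv α s) (deriv (deriv α) s) (deriv (deriv (deriv α)) s) = 0 := by
    intro s
    have hpos : 0 < ‖deriv (deriv α) s‖ := hκ s ▸ hκpos s
    have hNfun : N = fun u => ‖deriv (deriv α) u‖⁻¹ • deriv (deriv α) u := by
      funext u
      rw [hN, hκ]
    have h := inner_deriv_normalize_cross3 (dT' s) (norm_pos_iff.mp hpos)
    have hτs := hplanar s
    rw [hτ, hB, hT, hNfun, h] at hτs
    exact (mul_eq_zero.mp hτs).resolve_left (by positivity)
  have hCT : C = fun s => -deriv α s := by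
    funext s
    rw [hC, hplanar, hT]
    simp [Real.sqrt_sq (hκpos s).le, smul_smul, inv_mul_cancel₀ (hκpos s).ne']
  have hs : ∀ s v, φs s v = deriv α s - v • deriv (deriv α) s := by
    intro s v
    have h := (dα s).hasDerivAt.add ((dT s).hasDerivAt.neg.const_smul v)
    rw [hφs, hCT, sub_eq_add_neg, ← smul_neg]
    exact h.deriv
  have hv : ∀ s v, φv s v = -deriv α s := by
    intro s v
    have h := ((hasDerivAt_id v).smul_const (C s)).const_add (α s)
    rw [hφv, ← one_smul ℝ (-deriv α s), ← congrFun hCT s]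
    exact h.deriv
  have hss : ∀ s v, φss s v = deriv (deriv α) s - v • deriv (deriv (deriv α)) s := by
    intro s v
    simp only [hφss, hs]
    exact ((dT s).hasDerivAt.sub ((dT' s).hasDerivAt.const_smul v)).deriv
  have hsv : ∀ s v, φsv s v = -deriv (deriv α) s := by
    intro s v
    simp only [hφsv, hv]
    exact (dT s).hasDerivAt.neg.deriv
  have hvv : ∀ s v, φvv s v = 0 := by
    intro s v
    simp [hφvv, hv]
  intro s v _
  have hL : det3 (φs s v) (φv s v) (φss s v) = 0 := by
    have h := hdet s
    rw [det3_eq] at h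
    rw [hs, hv, hss, det3_eq]
    simp only [PiLp.sub_apply, PiLp.neg_apply, PiLp.smul_apply, smul_eq_mul]
    linear_combination v ^ 2 * h
  have hM : det3 (φs s v) (φv s v) (φsv s v) = 0 := by
    rw [hs, hv, hsv, det3_eq]
    simp only [PiLp.sub_apply, PiLp.neg_apply, PiLp.smul_apply, smul_eq_mul]
    ring
  have hN0 : det3 (φs s v) (φv s v) (φvv s v) = 0 := by
    simp [hvv, det3_eq]
  simp [hLL, hMM, hNN, hL, hM, hN0]
end

section
/- Let n_α(s) = −N(s) (the surface normal of the C-ruled surface along the base curve α, at v = 0). Then for all s ∈ ℝ: the geodesic curvature ⟨n_α(s) × T(s), T′(s)⟩ = 0, the normal curvature ⟨α″(s), n_α(s)⟩ = −κ(s) = −f(s)·cos θ(s) for any angle function θ, and the geodesic torsion ⟨n_α(s) × n_α′(s), T′(s)⟩ = 0. In particular, the normal curvature is nowhere zero, so the base curve α is a geodesic of the C-ruled surface but never an asymptotic line. -/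
open RealInnerProductSpace

/-- The cross product is orthogonal to every multiple of its first factor. -/
theorem inner_cross3_smul_left (c : ℝ) (u v : EuclideanSpace ℝ (Fin 3)) :
    ⟪cross3 u v, c • u⟫ = 0 := by
  simp [cross3, cross_apply, PiLp.inner_apply, Fin.sum_univ_three]
  ring

theorem stmt_15
    (α : ℝ → EuclideanSpace ℝ (Fin 3))
    (hα : ContDiff ℝ (⊤ : ℕ∞) α)
    (hunit : ∀ s, ‖deriv α s‖ = 1)
    (T : ℝ → EuclideanSpace ℝ (Fin 3)) (hT : ∀ s, T s = deriv α s)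
    (κ : ℝ → ℝ) (hκ : ∀ s, κ s = ‖deriv (deriv α) s‖) (hκpos : ∀ s, 0 < κ s)
    (N : ℝ → EuclideanSpace ℝ (Fin 3)) (hN : ∀ s, N s = (κ s)⁻¹ • deriv (deriv α) s)
    (B : ℝ → EuclideanSpace ℝ (Fin 3)) (hB : ∀ s, B s = cross3 (T s) (N s))
    (τ : ℝ → ℝ) (hτ : ∀ s, τ s = ⟪deriv N s, B s⟫)
    (f : ℝ → ℝ) (hf : ∀ s, f s = Real.sqrt (κ s ^ 2 + τ s ^ 2))
    (g : ℝ → ℝ) (hg : ∀ s, g s = κ s ^ 2 / (κ s ^ 2 + τ s ^ 2) * deriv (fun u => τ u / κ u) s)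
    (C : ℝ → EuclideanSpace ℝ (Fin 3))
    (hC : ∀ s, C s = (Real.sqrt (κ s ^ 2 + τ s ^ 2))⁻¹ • ((-κ s) • T s + τ s • B s))
    (W : ℝ → EuclideanSpace ℝ (Fin 3))
    (hW : ∀ s, W s = (Real.sqrt (κ s ^ 2 + τ s ^ 2))⁻¹ • (τ s • T s + κ s • B s))
    (θ : ℝ → ℝ) (hθdiff : Differentiable ℝ θ)
    (hθderiv : ∀ s, deriv θ s = g s)
    (hθκ : ∀ s, κ s = f s * Real.cos (θ s))
    (hθτ : ∀ s, τ s = f s * Real.sin (θ s))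
    (nα : ℝ → EuclideanSpace ℝ (Fin 3)) (hnα : ∀ s : ℝ, nα s = -N s) :
    ∀ s : ℝ,
      ⟪cross3 (nα s) (T s), deriv T s⟫ = 0 ∧
      ⟪deriv (deriv α) s, nα s⟫ = -κ s ∧
      ⟪deriv (deriv α) s, nα s⟫ = -(f s * Real.cos (θ s)) ∧
      ⟪cross3 (nα s) (deriv nα s), deriv T s⟫ = 0 ∧
      ⟪deriv (deriv α) s, nα s⟫ ≠ 0 := by
  intro s
  have hκ0 : κ s ≠ 0 := (hκpos s).ne'
  have hderivT : deriv T s = (-κ s) • nα s := by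
    rw [funext hT, hnα, hN, smul_neg, neg_smul, neg_neg, smul_inv_smul₀ hκ0]
  have hnormal : ⟪deriv (deriv α) s, nα s⟫ = -κ s := by
    rw [hnα, hN, inner_neg_right, real_inner_smul_right, real_inner_self_eq_norm_sq, ← hκ]
    field_simp
  refine ⟨?_, hnormal, ?_, ?_, ?_⟩
  · rw [hderivT, inner_cross3_smul_left]
  · rw [hnormal, ← hθκ]
  · rw [hderivT, inner_cross3_smul_left]
  · rw [hnormal]
    exact neg_ne_zero.mpr hκ0
end
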